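/- Let M be a finite matroid of rank r on ground set E. For all commuting variables λ and ξ (equivalently, for all elements of any commutative ring), χ(M; λ·ξ) = ∑_{X flat of M} λ^{r − rk(X)} · χ(M|X; λ) · χ(M/X; ξ), where the sum ranges over all flats (closed sets) X of M. -/

import Mathlib

/-!
In a product `χ(M|X; l) * χ(M/X; ξ)`, the first factor is a sum over `A ⊆ X` and the second a sum
over `X ⊆ B ⊆ E`, with the sign `(-1) ^ |X|` left over. Summing over all subsets `X` of `E`, the
coefficient of each pair `A ⊆ B` is the alternating sum over the Boolean interval `[A, B]`, which
vanishes unless `A = B`; the surviving diagonal terms form `χ(M; l * ξ)`. The sets `X` that are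
not flats contribute nothing, because `M/X` then has a loop and its characteristic polynomial is
zero.
-/

open Finset

/-- A finite matroid on ground set `E`, given by its rank function on finsets,
satisfying the standard rank axioms: the rank of a set is at most its cardinality,
rank is monotone, and rank is submodular. -/
structure FinMatroid (α : Type*) [DecidableEq α] where
  E : Finset α
  rk : Finset α → ℕ
  rk_le_card : ∀ A ⊆ E, rk A ≤ A.card
  rk_mono : ∀ ⦃A B : Finset α⦄, A ⊆ B → B ⊆ E → rk A ≤ rk B
  rk_submod : ∀ ⦃A B : Finset α⦄, A ⊆ E → B ⊆ E →
    rk (A ∪ B) + rk (A ∩ B) ≤ rk A + rk B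

/-- The characteristic polynomial of the matroid-like data given by ground set `G`,
rank function `f`, and rank `s`: `χ = ∑_{A ⊆ G} (-1) ^ |A| * l ^ (s - f A)`. -/
def charPoly {α R : Type*} [DecidableEq α] [CommRing R] (G : Finset α) (f : Finset α → ℕ)
    (s : ℕ) (l : R) : R :=
  ∑ A ∈ G.powerset, (-1 : R) ^ A.card * l ^ (s - f A)

section AlternatingSums

variable {α R : Type*}

theorem sum_Icc_eq_sum_powerset_sdiff {β : Type*} [DecidableEq α] [AddCommMonoid β]
    {A B : Finset α} (h : A ⊆ B) (g : Finset α → β) :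
    ∑ X ∈ Icc A B, g X = ∑ C ∈ (B \ A).powerset, g (C ∪ A) := by
  have disjoint_left : ∀ C ∈ (B \ A).powerset, Disjoint C A := fun C hC =>
    disjoint_of_subset_left (mem_powerset.1 hC) sdiff_disjoint
  rw [Icc_eq_image_powerset h, sum_image]
  · simp only [union_comm]
  · intro C hC D hD hCD
    have hCD' : C ∪ A = D ∪ A := by simpa only [union_comm] using hCD
    rw [← union_sdiff_cancel_right (disjoint_left C hC), hCD',
      union_sdiff_cancel_right (disjoint_left D hD)]

theorem neg_one_pow_card_union [DecidableEq α] [Ring R] {A B : Finset α} (h : Disjoint A B) :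
    (-1 : R) ^ #(A ∪ B) = (-1) ^ #A * (-1) ^ #B := by
  rw [card_union_of_disjoint h, pow_add]

theorem sum_powerset_neg_one_pow_card_mul_eq_zero [DecidableEq α] [Ring R] {G : Finset α}
    {e : α} (he : e ∈ G) {g : Finset α → R} (hg : ∀ A ⊆ G.erase e, g (insert e A) = g A) :
    ∑ A ∈ G.powerset, (-1) ^ #A * g A = 0 := by
  rw [← insert_erase he, sum_powerset_insert (notMem_erase e G), ← sum_add_distrib]
  refine sum_eq_zero fun A hA => ?_
  have hAe : A ⊆ G.erase e := mem_powerset.1 hA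
  rw [hg A hAe, card_insert_of_notMem fun h => notMem_erase e G (hAe h), pow_succ]
  simp

theorem sum_Icc_neg_one_pow_card [DecidableEq α] [Ring R] (A B : Finset α) :
    ∑ X ∈ Icc A B, (-1 : R) ^ #X = if A = B then (-1) ^ #A else 0 := by
  split_ifs with hAB
  · simp [hAB]
  by_cases h : A ⊆ B
  · obtain ⟨e, he⟩ : (B \ A).Nonempty := sdiff_nonempty.2 fun h' => hAB (h.antisymm h')
    rw [sum_Icc_eq_sum_powerset_sdiff h, sum_congr rfl fun C hC => neg_one_pow_card_union
      (disjoint_of_subset_left (mem_powerset.1 hC) sdiff_disjoint)]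
    exact sum_powerset_neg_one_pow_card_mul_eq_zero he fun _ _ => rfl
  · rw [Icc_eq_empty h, sum_empty]

theorem sum_powerset_neg_one_pow_card_mul_sum_powerset [Ring R] (B : Finset α)
    (g : Finset α → R) :
    ∑ X ∈ B.powerset, (-1) ^ #X * ∑ A ∈ X.powerset, g A = (-1) ^ #B * g B := by
  classical
  calc
    _ = ∑ A ∈ B.powerset, ∑ X ∈ Icc A B, (-1) ^ #X * g A := by
      simp only [mul_sum]
      refine sum_comm' fun X A => ?_
      simp only [mem_powerset, mem_Icc]
      exact ⟨fun ⟨hXB, hAX⟩ => ⟨⟨hAX, hXB⟩, hAX.trans hXB⟩, fun ⟨⟨hAX, hXB⟩, _⟩ => ⟨hXB, hAX⟩⟩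
    _ = ∑ A ∈ B.powerset, if A = B then (-1) ^ #A * g A else 0 := by
      simp only [← sum_mul, sum_Icc_neg_one_pow_card, ite_mul, zero_mul]
    _ = (-1) ^ #B * g B := by
      rw [sum_ite_eq' B.powerset B, if_pos (mem_powerset_self B)]

theorem sum_powerset_neg_one_pow_card_mul_sum_powerset_mul_sum_Icc [DecidableEq α] [Ring R]
    (E : Finset α) (g h : Finset α → R) :
    ∑ X ∈ E.powerset, (-1) ^ #X * (∑ A ∈ X.powerset, g A) * ∑ B ∈ Icc X E, h B =
      ∑ B ∈ E.powerset, (-1) ^ #B * g B * h B := by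
  simp only [← sum_powerset_neg_one_pow_card_mul_sum_powerset, sum_mul, mul_sum (Icc _ _)]
  refine sum_comm' fun X B => ?_
  simp only [mem_powerset, mem_Icc]
  exact ⟨fun ⟨_, hXB, hBE⟩ => ⟨hXB, hBE⟩, fun ⟨hXB, hBE⟩ => ⟨hXB.trans hBE, hXB, hBE⟩⟩

end AlternatingSums

section CharPoly

variable {α R : Type*} [DecidableEq α] [CommRing R] {E X : Finset α} {f : Finset α → ℕ}

theorem pow_mul_charPoly {s t : ℕ} (hft : ∀ A ⊆ X, f A ≤ t) (hts : t ≤ s) (l : R) :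
    l ^ (s - t) * charPoly X f t l = charPoly X f s l := by
  simp only [charPoly, mul_sum]
  refine sum_congr rfl fun A hA => ?_
  rw [mul_left_comm, ← pow_add, tsub_add_tsub_cancel hts (hft A (mem_powerset.1 hA))]

theorem charPoly_eq_zero_of_loop {e : α} (he : e ∈ E)
    (hf : ∀ A ⊆ E.erase e, f (insert e A) = f A) (s : ℕ) (l : R) : charPoly E f s l = 0 :=
  sum_powerset_neg_one_pow_card_mul_eq_zero he fun A hA => by rw [hf A hA]

theorem charPoly_contract_eq_sum_Icc (hX : X ⊆ E) (hf : ∀ B ∈ Icc X E, f X ≤ f B) (s : ℕ)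
    (ξ : R) :
    charPoly (E \ X) (fun A => f (A ∪ X) - f X) (s - f X) ξ =
      (-1) ^ #X * ∑ B ∈ Icc X E, (-1) ^ #B * ξ ^ (s - f B) := by
  rw [sum_Icc_eq_sum_powerset_sdiff hX, charPoly, mul_sum]
  refine sum_congr rfl fun C hC => ?_
  have hCX : C ⊆ E \ X := mem_powerset.1 hC
  have hfX : f X ≤ f (C ∪ X) :=
    hf _ (mem_Icc.2 ⟨subset_union_right, union_subset (hCX.trans sdiff_subset) hX⟩)
  have sign : (-1 : R) ^ #C = (-1) ^ #X * (-1) ^ #(C ∪ X) := by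
    rw [neg_one_pow_card_union (disjoint_of_subset_left hCX sdiff_disjoint), mul_left_comm,
      pow_mul_pow_eq_one _ (by simp), mul_one]
  rw [tsub_tsub_tsub_cancel_right hfX, sign, mul_assoc]

theorem charPoly_mul_eq_sum_powerset (hmono : ∀ ⦃A B : Finset α⦄, A ⊆ B → B ⊆ E → f A ≤ f B)
    (l ξ : R) :
    charPoly E f (f E) (l * ξ) =
      ∑ X ∈ E.powerset, l ^ (f E - f X) * charPoly X f (f X) l *
        charPoly (E \ X) (fun A => f (A ∪ X) - f X) (f E - f X) ξ := by
  calc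
    _ = ∑ B ∈ E.powerset, (-1) ^ #B * ((-1) ^ #B * l ^ (f E - f B)) *
          ((-1) ^ #B * ξ ^ (f E - f B)) := by
      refine sum_congr rfl fun B _ => ?_
      have sign_sq : (-1 : R) ^ #B * (-1) ^ #B = 1 := pow_mul_pow_eq_one _ (by simp)
      rw [← mul_assoc ((-1 : R) ^ #B) ((-1) ^ #B), sign_sq, one_mul, mul_left_comm, mul_pow]
    _ = ∑ X ∈ E.powerset, (-1) ^ #X * charPoly X f (f E) l *
          ∑ B ∈ Icc X E, (-1) ^ #B * ξ ^ (f E - f B) :=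
      (sum_powerset_neg_one_pow_card_mul_sum_powerset_mul_sum_Icc E _ _).symm
    _ = _ := by
      refine sum_congr rfl fun X hX => ?_
      have hXE : X ⊆ E := mem_powerset.1 hX
      rw [pow_mul_charPoly (fun A hA => hmono hA hXE) (hmono hXE Subset.rfl),
        charPoly_contract_eq_sum_Icc hXE fun B hB => hmono (mem_Icc.1 hB).1 (mem_Icc.1 hB).2]
      ring

theorem rank_insert_eq_of_subset (hmono : ∀ ⦃A B : Finset α⦄, A ⊆ B → B ⊆ E → f A ≤ f B)
    (hsubmod : ∀ ⦃A B : Finset α⦄, A ⊆ E → B ⊆ E → f (A ∪ B) + f (A ∩ B) ≤ f A + f B)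
    {A B : Finset α} {e : α} (hAB : A ⊆ B) (hBE : B ⊆ E) (he : e ∈ E)
    (hA : f (insert e A) ≤ f A) : f (insert e B) = f B := by
  have heA : insert e A ⊆ E := insert_subset he (hAB.trans hBE)
  have submod : f (insert e B) + f (insert e A ∩ B) ≤ f (insert e A) + f B := by
    simpa only [insert_union, union_eq_right.2 hAB] using hsubmod heA hBE
  have inter : f A ≤ f (insert e A ∩ B) :=
    hmono (subset_inter (subset_insert e A) hAB) (inter_subset_right.trans hBE)
  have mono : f B ≤ f (insert e B) := hmono (subset_insert e B) (insert_subset he hBE)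
  omega

theorem charPoly_contract_eq_zero_of_insert_le
    (hmono : ∀ ⦃A B : Finset α⦄, A ⊆ B → B ⊆ E → f A ≤ f B)
    (hsubmod : ∀ ⦃A B : Finset α⦄, A ⊆ E → B ⊆ E → f (A ∪ B) + f (A ∩ B) ≤ f A + f B)
    (hX : X ⊆ E) {e : α} (he : e ∈ E \ X) (hfe : f (insert e X) ≤ f X) (s : ℕ) (ξ : R) :
    charPoly (E \ X) (fun A => f (A ∪ X) - f X) s ξ = 0 := by
  refine charPoly_eq_zero_of_loop he (fun A hA => ?_) s ξ
  have hAE : A ⊆ E := (hA.trans (erase_subset e _)).trans sdiff_subset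
  rw [insert_union, rank_insert_eq_of_subset hmono hsubmod subset_union_right
    (union_subset hAE hX) (mem_sdiff.1 he).1 hfe]

theorem char_poly_multiplication_general
    (hmono : ∀ ⦃A B : Finset α⦄, A ⊆ B → B ⊆ E → f A ≤ f B)
    (hsubmod : ∀ ⦃A B : Finset α⦄, A ⊆ E → B ⊆ E → f (A ∪ B) + f (A ∩ B) ≤ f A + f B)
    (l ξ : R) :
    charPoly E f (f E) (l * ξ) =
      ∑ X ∈ E.powerset.filter (fun X => ∀ e ∈ E \ X, f X < f (insert e X)),
        l ^ (f E - f X) * charPoly X f (f X) l *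
          charPoly (E \ X) (fun A => f (A ∪ X) - f X) (f E - f X) ξ := by
  rw [charPoly_mul_eq_sum_powerset hmono]
  refine (sum_filter_of_ne fun X hX hne e he => ?_).symm
  by_contra hfe
  exact hne (mul_eq_zero_of_right _ (charPoly_contract_eq_zero_of_insert_le hmono hsubmod
    (mem_powerset.1 hX) he (not_lt.1 hfe) _ ξ))

end CharPoly

/-- Identity 9: the multiplication identity for the characteristic polynomial. -/
theorem char_poly_multiplication {α R : Type*} [DecidableEq α] [CommRing R]
    (M : FinMatroid α) (l ξ : R) :
    charPoly M.E M.rk (M.rk M.E) (l * ξ) =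
      ∑ X ∈ M.E.powerset.filter (fun X => ∀ e ∈ M.E \ X, M.rk X < M.rk (insert e X)),
        l ^ (M.rk M.E - M.rk X) * charPoly X M.rk (M.rk X) l *
          charPoly (M.E \ X) (fun A => M.rk (A ∪ X) - M.rk X) (M.rk M.E - M.rk X) ξ :=
  char_poly_multiplication_general M.rk_mono M.rk_submod l ξ
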